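/- Let G_τ be a bidirected graph and Rt(G_τ) any transitive reduction of G_τ. Then Ft(Rt(G_τ)) = Ft(G_τ). -/

import Mathlib

/-- A signed vertex `x^α` : a vertex together with a sign in `ℤˣ`. -/
abbrev SV (V : Type) := V × ℤˣ

/-- A dart : an ordered signed edge `(x^α, y^β)`, traversed from `x` (entered with
half-edge sign `α`) to `y` (left with half-edge sign `β`). -/
abbrev BDart (V : Type) := SV V × SV V

/-- A bidirected graph on the vertex set `V`, given as its set of (unordered) signed
edges `{x^α, y^β}`; the half-edge of such an edge at `x` has sign `α` and the
half-edge at `y` has sign `β`. -/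
abbrev BGraph (V : Type) := Set (Sym2 (SV V))

/-- `IsWalk G x l y` : the list of darts `l` forms a chain from `x` to `y` in `G`. -/
def IsWalk {V : Type} (G : BGraph V) : V → List (BDart V) → V → Prop
  | x, [], y => x = y
  | x, d :: l, y => d.1.1 = x ∧ Sym2.mk d.1 d.2 ∈ G ∧ IsWalk G d.2.1 l y

/-- `IsBWalk G x α l y β` : `l` is a b-walk from `x^α` to `y^β` : a nonempty chain
from `x` to `y` whose first half-edge sign at `x` is `α`, whose last half-edge sign
at `y` is `β`, and such that at every internal vertex occurrence the two incident
half-edge signs sum to `0`. -/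
def IsBWalk {V : Type} (G : BGraph V) (x : V) (α : ℤˣ) (l : List (BDart V)) (y : V)
    (β : ℤˣ) : Prop :=
  l ≠ [] ∧ IsWalk G x l y ∧ (∀ d ∈ l.head?, d.1.2 = α) ∧ (∀ d ∈ l.getLast?, d.2.2 = β) ∧
    List.Chain' (fun d d' => ((d.2.2 : ℤ) + (d'.1.2 : ℤ) = 0)) l

/-- `IsBPath G x α l y β` : `l` is a b-path from `x^α` to `y^β` : a b-walk from `x^α`
to `y^β` that is minimal, i.e. no proper subsequence of its darts, taken in the same
order, is a b-walk from `x^α` to `y^β`. -/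
def IsBPath {V : Type} (G : BGraph V) (x : V) (α : ℤˣ) (l : List (BDart V)) (y : V)
    (β : ℤˣ) : Prop :=
  IsBWalk G x α l y β ∧ ∀ l', l'.Sublist l → l' ≠ l → ¬ IsBWalk G x α l' y β

/-- The transitive closure `Ft G` : its edges are the edges `{x^α, y^β}` for which
`G` contains a b-path from `x^α` to `y^β`. -/
def Ft {V : Type} (G : BGraph V) : BGraph V :=
  {e | ∃ x α y β l, IsBPath G x α l y β ∧ e = Sym2.mk (x, α) (y, β)}

/-- The transitive closure `ft G H` of the partial graph `H` within `G` : the edges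
of `H` together with every edge `{x^α, y^β}` of `G` for which `H` contains a b-path
from `x^α` to `y^β`. -/
def ft {V : Type} (G H : BGraph V) : BGraph V :=
  H ∪ {e | e ∈ G ∧ ∃ x α y β l, IsBPath H x α l y β ∧ e = Sym2.mk (x, α) (y, β)}

/-- `IsTR G H` : `H` is a transitive reduction of `G` : a partial graph of `G`
minimal with the property `ft G H = G`. -/
def IsTR {V : Type} (G H : BGraph V) : Prop :=
  H ⊆ G ∧ ft G H = G ∧ ∀ H', H' ⊂ H → ft G H' ≠ G


/-- Existence of a b-walk, as an inductive predicate. -/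
inductive BReach {V : Type} (G : BGraph V) : SV V → SV V → Prop
  | single (a b : SV V) : Sym2.mk a b ∈ G → BReach G a b
  | cons (a b c : SV V) : Sym2.mk a b ∈ G → BReach G (b.1, -b.2) c → BReach G a c

theorem BReach.trans' {V : Type} {G : BGraph V} {a b c : SV V} (h : BReach G a b)
    (h2 : BReach G (b.1, -b.2) c) : BReach G a c := by
  induction h with
  | single a b h => exact .cons a b c h h2
  | cons a b d h _ ih => exact .cons a b c h (ih h2)

theorem BReach.symm' {V : Type} {G : BGraph V} {a b : SV V} (h : BReach G a b) :
    BReach G b a := by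
  induction h with
  | single a b h => exact .single b a (Sym2.eq_swap ▸ h)
  | cons a b d h _ ih =>
    refine ih.trans' ?_
    refine .single _ _ ?_
    rw [Sym2.eq_swap]
    simpa using h

theorem units_add_eq_zero (u v : ℤˣ) : ((u : ℤ) + (v : ℤ) = 0) ↔ v = -u := by
  rcases Int.units_eq_one_or u with rfl | rfl <;>
  rcases Int.units_eq_one_or v with rfl | rfl <;> decide

theorem isBWalk_cons {V : Type} (G : BGraph V) (x : V) (α : ℤˣ) (d : BDart V)
    (l : List (BDart V)) (y : V) (β : ℤˣ) :
    IsBWalk G x α (d :: l) y β ↔ d.1 = (x, α) ∧ Sym2.mk d.1 d.2 ∈ G ∧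
      (l = [] ∧ d.2 = (y, β) ∨ IsBWalk G d.2.1 (-d.2.2) l y β) := by
  obtain ⟨⟨a, s⟩, ⟨b, t⟩⟩ := d
  cases l with
  | nil => simp [IsBWalk, IsWalk]; tauto
  | cons e l =>
    simp [IsBWalk, IsWalk, units_add_eq_zero, List.Chain', List.isChain_cons_cons]
    tauto

theorem breach_of_walk {V : Type} {G : BGraph V} (l : List (BDart V)) :
    ∀ {x : V} {α : ℤˣ} {y : V} {β : ℤˣ}, IsBWalk G x α l y β → BReach G (x, α) (y, β) := by
  induction l with
  | nil => intro x α y β h; exact absurd rfl h.1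
  | cons d l ih =>
    intro x α y β h
    rw [isBWalk_cons] at h
    obtain ⟨h1, h2, ⟨_, h3⟩ | h3⟩ := h
    · rw [h1, h3] at h2; exact .single _ _ h2
    · rw [h1] at h2; exact .cons _ _ _ h2 (ih h3)

theorem walk_of_breach {V : Type} {G : BGraph V} {a b : SV V} (h : BReach G a b) :
    ∃ l, IsBWalk G a.1 a.2 l b.1 b.2 := by
  induction h with
  | single a b h => exact ⟨[(a, b)], (isBWalk_cons ..).2 ⟨rfl, h, .inl ⟨rfl, rfl⟩⟩⟩
  | cons a b c h _ ih =>
    obtain ⟨l, hl⟩ := ih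
    exact ⟨(a, b) :: l, (isBWalk_cons ..).2 ⟨rfl, h, .inr hl⟩⟩

theorem path_of_walk {V : Type} {G : BGraph V} {x : V} {α : ℤˣ} {y : V} {β : ℤˣ} (n : ℕ) :
    ∀ l : List (BDart V), l.length ≤ n → IsBWalk G x α l y β → ∃ l, IsBPath G x α l y β := by
  induction n with
  | zero =>
    intro l hl h
    exact absurd (List.length_eq_zero_iff.1 (by omega)) h.1
  | succ n ih =>
    intro l hl h
    by_cases hp : IsBPath G x α l y β
    · exact ⟨l, hp⟩
    · have : ∃ l', l'.Sublist l ∧ l' ≠ l ∧ IsBWalk G x α l' y β := by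
        by_contra hc
        exact hp ⟨h, fun l' h1 h2 h3 => hc ⟨l', h1, h2, h3⟩⟩
      obtain ⟨l', h1, h2, h3⟩ := this
      have h4 : l'.length ≠ l.length := fun he => h2 (h1.eq_of_length he)
      have h5 := h1.length_le
      exact ih l' (by omega) h3

theorem path_iff_breach {V : Type} {G : BGraph V} {x : V} {α : ℤˣ} {y : V} {β : ℤˣ} :
    (∃ l, IsBPath G x α l y β) ↔ BReach G (x, α) (y, β) := by
  constructor
  · rintro ⟨l, hl⟩; exact breach_of_walk l hl.1
  · intro h
    obtain ⟨l, hl⟩ := walk_of_breach h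
    exact path_of_walk l.length l le_rfl hl

theorem BReach.lift {V : Type} {G H : BGraph V}
    (hGH : ∀ a b, Sym2.mk a b ∈ G → BReach H a b) {a b : SV V} (h : BReach G a b) :
    BReach H a b := by
  induction h with
  | single a b h => exact hGH a b h
  | cons a b c h _ ih => exact (hGH a b h).trans' ih

theorem Ft_mono_of {V : Type} {G H : BGraph V}
    (hGH : ∀ a b, Sym2.mk a b ∈ G → BReach H a b) : Ft G ⊆ Ft H := by
  rintro e ⟨x, α, y, β, l, hl, rfl⟩
  obtain ⟨m, hm⟩ := path_iff_breach.2 ((path_iff_breach.1 ⟨l, hl⟩).lift hGH)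
  exact ⟨x, α, y, β, m, hm, rfl⟩

/-- For any transitive reduction `H` of `G`, `Ft H = Ft G`. -/
theorem stmt11 {V : Type} [Fintype V] (G H : BGraph V) (h : IsTR G H) :
    Ft H = Ft G := by
  obtain ⟨hs, hf, _⟩ := h
  apply Set.Subset.antisymm
  · exact Ft_mono_of fun a b hab => .single a b (hs hab)
  · apply Ft_mono_of
    intro a b hab
    rw [← hf] at hab
    rcases hab with hab | ⟨_, x, α, y, β, l, hl, he⟩
    · exact .single a b hab
    · have hr := path_iff_breach.1 ⟨l, hl⟩
      rcases Sym2.eq_iff.1 he with ⟨rfl, rfl⟩ | ⟨rfl, rfl⟩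
      · exact hr
      · exact hr.symm'
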